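/- Let Γ be a countable discrete group, N a finite normal subgroup, and μ a finitely supported, generating, transient probability measure on Γ with Green function G and Martin kernel K(x,y) = G(yx⁻¹)/G(y). If f : Γ → ℝ is a finitely supported function with ∑_{g∈N} f(g·x) = 0 for every x ∈ Γ, then the function y ↦ ∑_{x∈Γ} f(x)·K(x,y) vanishes at infinity, i.e. tends to 0 along the cofinite filter on Γ. -/

import Mathlib

/-- Convolution of two (signed) measures on a discrete group:
`(μ ∗ ν)(x) = ∑_y μ(y) ν(y⁻¹ x)`. -/
noncomputable def conv {G : Type*} [Group G] (μ ν : G → ℝ) : G → ℝ :=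
  fun x => ∑' y, μ y * ν (y⁻¹ * x)

/-- Convolution powers: `μ^{*0} = δ_e`, `μ^{*(n+1)} = μ^{*n} ∗ μ`. -/
noncomputable def convPow {G : Type*} [Group G] (μ : G → ℝ) : ℕ → G → ℝ
  | 0 => Set.indicator ({1} : Set G) (fun _ => (1 : ℝ))
  | n + 1 => conv (convPow μ n) μ

/-- A measure `μ` is generating if every point gets positive mass from some
convolution power `μ^{*n}`, `n ≥ 1`. -/
def IsGenerating {G : Type*} [Group G] (μ : G → ℝ) : Prop :=
  ∀ x : G, ∃ n : ℕ, 1 ≤ n ∧ 0 < convPow μ n x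

/-- A measure `μ` is transient if its Green function `∑_n μ^{*n}(x)` is finite
(i.e. the series is summable) at every point. -/
def IsTransient {G : Type*} [Group G] (μ : G → ℝ) : Prop :=
  ∀ x : G, Summable fun n => convPow μ n x

/-- The Green function `G(x) = ∑_{n ≥ 0} μ^{*n}(x)`. -/
noncomputable def greenFn {G : Type*} [Group G] (μ : G → ℝ) : G → ℝ :=
  fun x => ∑' n, convPow μ n x

/-- The Martin kernel `K(x, y) = G(y x⁻¹) / G(y)`. -/
noncomputable def martinKernel {G : Type*} [Group G] (μ : G → ℝ) (x y : G) : ℝ :=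
  greenFn μ (y * x⁻¹) / greenFn μ y

/-- The pushforward of a measure `μ` on `Γ` to the quotient group `Γ/N`:
`μ̄(c) = ∑_{x : π(x) = c} μ(x)`. -/
noncomputable def pushforward {Γ : Type*} [Group Γ] (N : Subgroup Γ) [N.Normal]
    (μ : Γ → ℝ) : Γ ⧸ N → ℝ :=
  fun c => ∑' x : {x : Γ // (QuotientGroup.mk x : Γ ⧸ N) = c}, μ x

/-!
For fixed `y`, the function `K(·, y)` is excessive for `u ↦ ∑ₛ μ(s) u(s ·)`, harmonic away from `y`,
and equal to `1` at the identity. Harnack's inequality makes the set of normalized excessive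
functions compact for pointwise convergence, so along every ultrafilter going to infinity `K(·, y)`
converges to a normalized nonnegative harmonic function `h`. It remains to see that `h` is invariant
under `N`, since it then pairs to zero with `f`.

Let `M = m(g)` be the maximum of `k(b)` over normalized nonnegative harmonic `k` and `b ∈ N`.
Renormalized right translates give `k(b x) ≤ M k(x)`. As `N` is normal, `x g ∈ N x`, so
`M m - m(· g)` is nonnegative; it is harmonic and vanishes at the identity, hence everywhere. Thus
`m(gⁿ) = Mⁿ`, and `M = 1` because `g` has finite order. So `k(b x) ≤ k(x)` for all `b ∈ N`, and
applying this to `b⁻¹` gives equality.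
-/

section Summation

lemma continuous_tsum_mul {α : Type*} {f : α → ℝ} (hf : (Function.support f).Finite) :
    Continuous fun u : α → ℝ => ∑' x, f x * u x := by
  have hsum : ∀ u : α → ℝ, ∑' x, f x * u x = ∑ x ∈ hf.toFinset, f x * u x := fun u =>
    tsum_eq_sum fun x hx => by simp [show f x = 0 by simpa using hx]
  simp_rw [hsum]
  fun_prop

lemma tsum_eq_zero_of_tsum_subgroup_mul_eq_zero {G E : Type*} [Group G] [AddCommGroup E]
    [UniformSpace E] [IsUniformAddGroup E] [CompleteSpace E] [T0Space E] (H : Subgroup G)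
    {φ : G → E} (hφ : Summable φ) (hzero : ∀ x, ∑' g : H, φ (g * x) = 0) :
    ∑' x, φ x = 0 := by
  obtain ⟨S, hS, -⟩ := H.exists_isComplement_right 1
  let e : S × H ≃ G := (Equiv.prodComm S H).trans (Equiv.ofBijective _ hS)
  calc ∑' x, φ x
      = ∑' p, φ (e p) := (e.tsum_eq φ).symm
    _ = ∑' (x : S) (g : H), φ (g * x) := (e.summable_iff.2 hφ).tsum_prod
    _ = 0 := by simp_rw [hzero, tsum_zero]

end Summation

section Convolution

variable {Γ : Type*} [Group Γ] {μ : Γ → ℝ}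

lemma convPow_nonneg (hμ : ∀ x, 0 ≤ μ x) (n : ℕ) (x : Γ) : 0 ≤ convPow μ n x := by
  induction n generalizing x with
  | zero => exact Set.indicator_nonneg (fun _ _ => zero_le_one) x
  | succ n ih => exact tsum_nonneg fun y => mul_nonneg (ih y) (hμ _)

lemma convPow_succ_apply (μ : Γ → ℝ) (n : ℕ) (z : Γ) :
    convPow μ (n + 1) z = ∑' s, μ s * convPow μ n (z * s⁻¹) := by
  rw [convPow, conv, ← ((Equiv.inv Γ).trans (Equiv.mulLeft z)).tsum_eq]
  simp [mul_comm]

lemma greenFn_nonneg (hμ : ∀ x, 0 ≤ μ x) (x : Γ) : 0 ≤ greenFn μ x :=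
  tsum_nonneg fun n => convPow_nonneg hμ n x

lemma greenFn_pos (hμ : ∀ x, 0 ≤ μ x) (hgen : IsGenerating μ) (htrans : IsTransient μ) (x : Γ) :
    0 < greenFn μ x := by
  obtain ⟨n, -, hn⟩ := hgen x
  exact (htrans x).tsum_pos (fun n => convPow_nonneg hμ n x) n hn

lemma hasSum_mul_greenFn (hfin : (Function.support μ).Finite) (htrans : IsTransient μ) (z : Γ) :
    HasSum (fun s => μ s * greenFn μ (z * s⁻¹)) (greenFn μ z - convPow μ 0 z) := by
  have hsupp : ∀ (u : Γ → ℝ), ∀ s ∉ hfin.toFinset, μ s * u s = 0 := fun u s hs => by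
    simp [show μ s = 0 by simpa using hs]
  have hgreen : greenFn μ z - convPow μ 0 z =
      ∑ s ∈ hfin.toFinset, μ s * greenFn μ (z * s⁻¹) := by
    calc greenFn μ z - convPow μ 0 z
        = ∑' n, convPow μ (n + 1) z := by rw [greenFn, (htrans z).tsum_eq_zero_add]; ring
      _ = ∑' n, ∑ s ∈ hfin.toFinset, μ s * convPow μ n (z * s⁻¹) := by
          simp_rw [convPow_succ_apply]
          exact tsum_congr fun n => tsum_eq_sum (hsupp _)
      _ = ∑ s ∈ hfin.toFinset, ∑' n, μ s * convPow μ n (z * s⁻¹) :=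
          Summable.tsum_finsetSum fun s _ => (htrans _).mul_left _
      _ = ∑ s ∈ hfin.toFinset, μ s * greenFn μ (z * s⁻¹) := by simp_rw [tsum_mul_left, greenFn]
  rw [hgreen]
  exact hasSum_sum_of_ne_finset_zero (hsupp _)

end Convolution

/-- Excessive (nonnegative superharmonic) functions for the operator `u ↦ ∑ₛ μ(s) u(s ·)`. Bounding
all finite partial sums avoids a separate summability requirement. -/
structure IsExcessive {Γ : Type*} [Group Γ] (μ u : Γ → ℝ) : Prop where
  nonneg : ∀ x, 0 ≤ u x
  sum_le : ∀ (F : Finset Γ) (x : Γ), ∑ s ∈ F, μ s * u (s * x) ≤ u x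

/-- Harmonic functions for the operator `u ↦ ∑ₛ μ(s) u(s ·)`. The translation is on the left because
`K(s * x, y) = G(y * x⁻¹ * s⁻¹) / G(y)`. -/
def IsHarmonic {Γ : Type*} [Group Γ] (μ h : Γ → ℝ) : Prop :=
  ∀ x, HasSum (fun s => μ s * h (s * x)) (h x)

/-- Excessive functions taking the value `1` at the identity; the Martin kernels `K(·, y)` are of
this kind. -/
def normalizedExcessive {Γ : Type*} [Group Γ] (μ : Γ → ℝ) : Set (Γ → ℝ) :=
  {u | IsExcessive μ u ∧ u 1 = 1}

/-- Nonnegative harmonic functions taking the value `1` at the identity; the limits at infinity of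
Martin kernels are of this kind. -/
def normalizedHarmonic {Γ : Type*} [Group Γ] (μ : Γ → ℝ) : Set (Γ → ℝ) :=
  {h | h ∈ normalizedExcessive μ ∧ IsHarmonic μ h}

section Harmonic

variable {Γ : Type*} [Group Γ] {μ u h k : Γ → ℝ}

namespace IsExcessive

lemma div_const (hu : IsExcessive μ u) {c : ℝ} (hc : 0 ≤ c) :
    IsExcessive μ fun x => u x / c where
  nonneg x := div_nonneg (hu.nonneg x) hc
  sum_le F x := by
    simp_rw [← mul_div_assoc]
    rw [← Finset.sum_div]
    exact div_le_div_of_nonneg_right (hu.sum_le F x) hc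

lemma comp_mul_right (hu : IsExcessive μ u) (y : Γ) : IsExcessive μ fun x => u (x * y) where
  nonneg x := hu.nonneg _
  sum_le F x := by simpa only [mul_assoc] using hu.sum_le F (x * y)

/-- Harnack's inequality. -/
lemma convPow_mul_le (hμ : ∀ x, 0 ≤ μ x) (hu : IsExcessive μ u) (n : ℕ) (x w : Γ) :
    convPow μ n x * u (x * w) ≤ u w := by
  induction n generalizing x w with
  | zero =>
    by_cases hx : x = 1
    · simp [convPow, hx]
    · simp [convPow, hx, hu.nonneg w]
  | succ n ih =>
    rw [convPow_succ_apply, ← tsum_mul_right]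
    refine tsum_le_of_sum_le' (hu.nonneg w) fun F =>
      (Finset.sum_le_sum fun s _ => ?_).trans (hu.sum_le F w)
    have hstep : convPow μ n (x * s⁻¹) * u (x * w) ≤ u (s * w) := by
      simpa [mul_assoc] using ih (x * s⁻¹) (s * w)
    rw [mul_assoc]
    exact mul_le_mul_of_nonneg_left hstep (hμ s)

lemma pos_of_pos (hμ : ∀ x, 0 ≤ μ x) (hgen : IsGenerating μ) (hu : IsExcessive μ u) {y : Γ}
    (hy : 0 < u y) (x : Γ) : 0 < u x := by
  obtain ⟨n, -, hn⟩ := hgen (y * x⁻¹)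
  have harnack : convPow μ n (y * x⁻¹) * u y ≤ u x := by
    simpa using hu.convPow_mul_le hμ n (y * x⁻¹) x
  exact (mul_pos hn hy).trans_le harnack

lemma eq_zero_of_apply_eq_zero (hμ : ∀ x, 0 ≤ μ x) (hgen : IsGenerating μ) (hu : IsExcessive μ u)
    {y : Γ} (hy : u y = 0) : u = 0 := by
  by_contra hne
  obtain ⟨x, hx⟩ := Function.ne_iff.1 hne
  exact (hu.pos_of_pos hμ hgen ((hu.nonneg x).lt_of_ne' hx) y).ne' hy

end IsExcessive

namespace IsHarmonic

lemma isExcessive (hμ : ∀ x, 0 ≤ μ x) (hh : IsHarmonic μ h) (h0 : ∀ x, 0 ≤ h x) :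
    IsExcessive μ h where
  nonneg := h0
  sum_le F x := sum_le_hasSum F (fun s _ => mul_nonneg (hμ s) (h0 _)) (hh x)

lemma const_mul (hh : IsHarmonic μ h) (c : ℝ) : IsHarmonic μ fun x => c * h x := fun x => by
  simpa only [mul_left_comm] using (hh x).mul_left c

lemma sub (hh : IsHarmonic μ h) (hk : IsHarmonic μ k) : IsHarmonic μ fun x => h x - k x :=
  fun x => by simpa only [mul_sub] using (hh x).sub (hk x)

lemma comp_mul_right (hh : IsHarmonic μ h) (y : Γ) : IsHarmonic μ fun x => h (x * y) :=
  fun x => by simpa only [mul_assoc] using hh (x * y)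

end IsHarmonic

lemma isCompact_normalizedExcessive (hμ : ∀ x, 0 ≤ μ x) (hgen : IsGenerating μ) :
    IsCompact (normalizedExcessive μ) := by
  choose n _ hn using hgen
  have hbox : normalizedExcessive μ ⊆
      Set.univ.pi fun x => Set.Icc 0 (convPow μ (n x) x)⁻¹ := by
    rintro u ⟨hu, hu1⟩ x -
    have harnack : convPow μ (n x) x * u x ≤ 1 := by
      simpa [hu1] using hu.convPow_mul_le hμ (n x) x 1
    exact ⟨hu.nonneg x, by rwa [← mul_one (_)⁻¹, le_inv_mul_iff₀ (hn x)]⟩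
  have hclosed : IsClosed (normalizedExcessive μ) := by
    have hset : normalizedExcessive μ = {u | ∀ x, 0 ≤ u x} ∩
        {u | ∀ (F : Finset Γ) (x : Γ), ∑ s ∈ F, μ s * u (s * x) ≤ u x} ∩ {u | u 1 = 1} :=
      Set.ext fun u => and_congr_left' ⟨fun hu => ⟨hu.1, hu.2⟩, fun hu => ⟨hu.1, hu.2⟩⟩
    simp only [hset, Set.ofPred_forall]
    refine ((isClosed_iInter fun x => ?_).inter
      (isClosed_iInter fun F => isClosed_iInter fun x => ?_)).inter ?_
    · exact isClosed_le (by fun_prop) (by fun_prop)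
    · exact isClosed_le (by fun_prop) (by fun_prop)
    · exact isClosed_eq (by fun_prop) (by fun_prop)
  exact (isCompact_univ_pi fun x => isCompact_Icc).of_isClosed_subset hclosed hbox

lemma isClosed_setOf_hasSum_mul_apply (hfin : (Function.support μ).Finite) (x : Γ) :
    IsClosed {h : Γ → ℝ | HasSum (fun s => μ s * h (s * x)) (h x)} := by
  have hsummable : ∀ h : Γ → ℝ, Summable fun s => μ s * h (s * x) := fun h =>
    summable_of_hasFiniteSupport (hfin.subset (Function.support_mul_subset_left _ _))
  simp_rw [(hsummable _).hasSum_iff]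
  have htranslate : Continuous fun (h : Γ → ℝ) s => h (s * x) := by fun_prop
  exact isClosed_eq ((continuous_tsum_mul hfin).comp htranslate) (continuous_apply x)

lemma isCompact_normalizedHarmonic (hμ : ∀ x, 0 ≤ μ x) (hfin : (Function.support μ).Finite)
    (hgen : IsGenerating μ) : IsCompact (normalizedHarmonic μ) := by
  have hclosed : IsClosed {h | IsHarmonic μ h} := by
    simp only [IsHarmonic, Set.ofPred_forall]
    exact isClosed_iInter (isClosed_setOf_hasSum_mul_apply hfin)
  exact (isCompact_normalizedExcessive hμ hgen).inter_right hclosed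

lemma pos_of_mem_normalizedHarmonic (hμ : ∀ x, 0 ≤ μ x) (hgen : IsGenerating μ)
    (hh : h ∈ normalizedHarmonic μ) (x : Γ) : 0 < h x :=
  hh.1.1.pos_of_pos hμ hgen (hh.1.2.symm ▸ one_pos) x

lemma translate_div_mem_normalizedHarmonic (hμ : ∀ x, 0 ≤ μ x) (hgen : IsGenerating μ)
    (hh : h ∈ normalizedHarmonic μ) (y : Γ) :
    (fun x => h (x * y) / h y) ∈ normalizedHarmonic μ := by
  have hy := pos_of_mem_normalizedHarmonic hμ hgen hh y
  refine ⟨⟨(hh.1.1.comp_mul_right y).div_const hy.le, by simp [hy.ne']⟩, ?_⟩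
  simpa only [div_eq_inv_mul] using (hh.2.comp_mul_right y).const_mul (h y)⁻¹

end Harmonic

section Invariance

variable {Γ : Type*} [Group Γ] {μ h : Γ → ℝ}

lemma exists_forall_apply_le_of_isCompact {ι : Type*} {S : Set (ι → ℝ)} (hS : IsCompact S)
    (hSne : S.Nonempty) {T : Set ι} (hT : T.Finite) (hTne : T.Nonempty) :
    ∃ m ∈ S, ∃ i ∈ T, ∀ k ∈ S, ∀ j ∈ T, k j ≤ m i := by
  have hmax : ∀ i, ∃ m ∈ S, ∀ k ∈ S, k i ≤ m i := fun i =>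
    hS.exists_isMaxOn hSne (continuous_apply i).continuousOn
  choose m hmS hm using hmax
  obtain ⟨i, hi, hmi⟩ := T.exists_max_image (fun i => m i i) hT hTne
  exact ⟨m i, hmS i, i, hi, fun k hk j hj => (hm j k hk).trans (hmi j hj)⟩

lemma apply_mul_eq_of_apply_mul_le (hμ : ∀ x, 0 ≤ μ x) (hgen : IsGenerating μ)
    (hh : h ∈ normalizedHarmonic μ) {g : Γ} (hle : ∀ x, h (x * g) ≤ h g * h x) (x : Γ) :
    h (x * g) = h g * h x := by
  have hharm : IsHarmonic μ fun x => h g * h x - h (x * g) :=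
    (hh.2.const_mul (h g)).sub (hh.2.comp_mul_right g)
  have hexc := hharm.isExcessive hμ fun x => sub_nonneg.2 (hle x)
  have hone : h g * h 1 - h (1 * g) = 0 := by simp [hh.1.2]
  exact (sub_eq_zero.1 (congrFun (hexc.eq_zero_of_apply_eq_zero hμ hgen hone) x)).symm

lemma apply_eq_one_of_isOfFinOrder {G : Type*} [Monoid G] {h : G → ℝ} {g : G}
    (hg : IsOfFinOrder g) (hg0 : 0 ≤ h g) (h1 : h 1 = 1) (hmul : ∀ x, h (x * g) = h g * h x) :
    h g = 1 := by
  have hpow : ∀ n : ℕ, h (g ^ n) = h g ^ n := fun n => by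
    induction n with
    | zero => simpa using h1
    | succ n ih => rw [pow_succ, hmul, ih, pow_succ']
  refine (pow_eq_one_iff_of_nonneg hg0 hg.orderOf_pos.ne').1 ?_
  rw [← hpow, pow_orderOf_eq_one, h1]

lemma apply_mul_le_of_mem_finite_normal (hμ : ∀ x, 0 ≤ μ x) (hfin : (Function.support μ).Finite)
    (hgen : IsGenerating μ) (N : Subgroup Γ) [N.Normal] [Finite N]
    (hh : h ∈ normalizedHarmonic μ) {a : Γ} (ha : a ∈ N) (x : Γ) : h (a * x) ≤ h x := by
  obtain ⟨m, hm, g, hg, hmax⟩ := exists_forall_apply_le_of_isCompact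
    (isCompact_normalizedHarmonic hμ hfin hgen) ⟨h, hh⟩ (N : Set Γ).toFinite ⟨1, N.one_mem⟩
  have hle : ∀ k ∈ normalizedHarmonic μ, ∀ b ∈ N, ∀ x, k (b * x) ≤ m g * k x := by
    intro k hk b hb x
    rw [← div_le_iff₀ (pos_of_mem_normalizedHarmonic hμ hgen hk x)]
    exact hmax _ (translate_div_mem_normalizedHarmonic hμ hgen hk x) b hb
  have hright : ∀ x, m (x * g) ≤ m g * m x := fun x => by
    simpa using hle m hm (x * g * x⁻¹) (‹N.Normal›.conj_mem g hg x) x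
  have hgfin : IsOfFinOrder g :=
    N.subtype.isOfFinOrder (isOfFinOrder_of_finite (⟨g, hg⟩ : N))
  have hmg : m g = 1 := apply_eq_one_of_isOfFinOrder hgfin (hm.1.1.nonneg g) hm.1.2
    (apply_mul_eq_of_apply_mul_le hμ hgen hm hright)
  simpa [hmg] using hle h hh a ha x

lemma apply_mul_eq_of_mem_finite_normal (hμ : ∀ x, 0 ≤ μ x) (hfin : (Function.support μ).Finite)
    (hgen : IsGenerating μ) (N : Subgroup Γ) [N.Normal] [Finite N]
    (hh : h ∈ normalizedHarmonic μ) {a : Γ} (ha : a ∈ N) (x : Γ) : h (a * x) = h x := by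
  refine le_antisymm (apply_mul_le_of_mem_finite_normal hμ hfin hgen N hh ha x) ?_
  simpa using apply_mul_le_of_mem_finite_normal hμ hfin hgen N hh (N.inv_mem ha) (a * x)

end Invariance

section MartinKernel

variable {Γ : Type*} [Group Γ] {μ : Γ → ℝ}

lemma isExcessive_greenFn_mul_inv (hμ : ∀ x, 0 ≤ μ x) (hfin : (Function.support μ).Finite)
    (htrans : IsTransient μ) (y : Γ) : IsExcessive μ fun x => greenFn μ (y * x⁻¹) where
  nonneg x := greenFn_nonneg hμ _
  sum_le F x := by
    have hsum := hasSum_mul_greenFn hfin htrans (y * x⁻¹)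
    have hle := sum_le_hasSum F (fun s _ => mul_nonneg (hμ s) (greenFn_nonneg hμ _)) hsum
    simp_rw [mul_inv_rev, ← mul_assoc y]
    exact hle.trans (sub_le_self _ (convPow_nonneg hμ 0 _))

lemma martinKernel_mem_normalizedExcessive (hμ : ∀ x, 0 ≤ μ x)
    (hfin : (Function.support μ).Finite) (hgen : IsGenerating μ) (htrans : IsTransient μ) (y : Γ) :
    (fun x => martinKernel μ x y) ∈ normalizedExcessive μ :=
  ⟨(isExcessive_greenFn_mul_inv hμ hfin htrans y).div_const (greenFn_nonneg hμ y),
    by simp [martinKernel, (greenFn_pos hμ hgen htrans y).ne']⟩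

lemma hasSum_mul_martinKernel (hfin : (Function.support μ).Finite) (htrans : IsTransient μ)
    {x y : Γ} (hxy : y ≠ x) :
    HasSum (fun s => μ s * martinKernel μ (s * x) y) (martinKernel μ x y) := by
  have hzero : convPow μ 0 (y * x⁻¹) = 0 := by simp [convPow, mul_inv_eq_one, hxy]
  have hsum := (hasSum_mul_greenFn hfin htrans (y * x⁻¹)).div_const (greenFn μ y)
  simpa only [martinKernel, hzero, sub_zero, mul_inv_rev, mul_assoc, mul_div_assoc] using hsum

lemma exists_tendsto_martinKernel (hμ : ∀ x, 0 ≤ μ x) (hfin : (Function.support μ).Finite)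
    (hgen : IsGenerating μ) (htrans : IsTransient μ) {U : Ultrafilter Γ}
    (hU : (U : Filter Γ) ≤ Filter.cofinite) :
    ∃ h ∈ normalizedHarmonic μ,
      Filter.Tendsto (fun y x => martinKernel μ x y) U (nhds h) := by
  have hmem : ∀ᶠ y in (U : Filter Γ), (fun x => martinKernel μ x y) ∈ normalizedExcessive μ :=
    .of_forall (martinKernel_mem_normalizedExcessive hμ hfin hgen htrans)
  obtain ⟨h, hh, hlim⟩ := (isCompact_normalizedExcessive hμ hgen).ultrafilter_le_nhds
    (U.map fun y x => martinKernel μ x y) (Filter.tendsto_principal.2 hmem)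
  refine ⟨h, ⟨hh, fun x => ?_⟩, hlim⟩
  refine (isClosed_setOf_hasSum_mul_apply hfin x).mem_of_tendsto hlim ?_
  filter_upwards [hU (Set.finite_singleton x).compl_mem_cofinite] with y hy
  exact hasSum_mul_martinKernel hfin htrans hy

end MartinKernel

theorem martin_kernel_of_mean_zero_vanishes_general
    {Γ : Type*} [Group Γ] (N : Subgroup Γ) [N.Normal] [Finite N]
    (μ : Γ → ℝ) (hμ : ∀ x, 0 ≤ μ x) (hfin : (Function.support μ).Finite)
    (hgen : IsGenerating μ) (htrans : IsTransient μ)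
    (f : Γ → ℝ) (hf_fin : (Function.support f).Finite)
    (hf_mean : ∀ x : Γ, ∑' g : N, f ((g : Γ) * x) = 0) :
    Filter.Tendsto (fun y : Γ => ∑' x : Γ, f x * martinKernel μ x y)
      Filter.cofinite (nhds 0) := by
  refine Filter.tendsto_iff_ultrafilter _ _ _ |>.2 fun U hU => ?_
  obtain ⟨h, hh, hlim⟩ := exists_tendsto_martinKernel hμ hfin hgen htrans hU
  have hinv : ∀ (g : N) (x : Γ), h (g * x) = h x := fun g =>
    apply_mul_eq_of_mem_finite_normal hμ hfin hgen N hh g.2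
  have hsummable : Summable fun x => f x * h x :=
    summable_of_hasFiniteSupport (hf_fin.subset (Function.support_mul_subset_left _ _))
  have hpairing : ∑' x, f x * h x = 0 :=
    tsum_eq_zero_of_tsum_subgroup_mul_eq_zero N hsummable fun x => by
      simp_rw [hinv, tsum_mul_right, hf_mean, zero_mul]
  rw [← hpairing]
  exact ((continuous_tsum_mul hf_fin).tendsto h).comp hlim

/-- For a finitely supported, generating, transient probability measure `μ` on
a countable group `Γ` with finite normal subgroup `N`: if `f : Γ → ℝ` is
finitely supported with `∑_{g ∈ N} f(g x) = 0` for every `x`, then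
`y ↦ ∑_x f(x) K(x, y)` vanishes at infinity. -/
theorem martin_kernel_of_mean_zero_vanishes
    {Γ : Type*} [Group Γ] [Countable Γ]
    (N : Subgroup Γ) [N.Normal] [Finite N]
    (μ : Γ → ℝ) (hμ0 : ∀ x, 0 ≤ μ x) (hμ1 : HasSum μ 1)
    (hfin : (Function.support μ).Finite)
    (hgen : IsGenerating μ) (htrans : IsTransient μ)
    (f : Γ → ℝ) (hf_fin : (Function.support f).Finite)
    (hf_mean : ∀ x : Γ, ∑' g : N, f ((g : Γ) * x) = 0) :
    Filter.Tendsto (fun y : Γ => ∑' x : Γ, f x * martinKernel μ x y)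
      Filter.cofinite (nhds 0) :=
  martin_kernel_of_mean_zero_vanishes_general N μ hμ0 hfin hgen htrans f hf_fin hf_mean
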